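/- Let n ≥ 2 and s ∈ (0,1). There exists a constant C₁ > 0, depending only on n and s, such that for all α₁, α₂ ∈ (2s, 1) ∩ (0,1) and all bounded functions u₁, u₂ : ℝⁿ → ℝ with finite Hölder seminorms [u₁]_{C^{0,α₁}(ℝⁿ)} < ∞ and [u₂]_{C^{0,α₂}(ℝⁿ)} < ∞, the function I(x) := ∫_{ℝⁿ} (u₁(x) − u₁(y))(u₂(x) − u₂(y))/|x−y|^{n+2s} dy is well defined (the integral converges absolutely for every x), is bounded, has finite (min{α₁,α₂} − 2s)-Hölder seminorm on ℝⁿ, and sup_{ℝⁿ} |I| + [I]_{C^{0, min{α₁,α₂}−2s}(ℝⁿ)} ≤ C₁ ‖u₁‖_{C^{α₁}(ℝⁿ)} ‖u₂‖_{C^{α₂}(ℝⁿ)}. -/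

import Mathlib

/-!
Substituting `y = x - z` writes `I x` as the integral of `δ u₁ x z * δ u₂ x z / ‖z‖ ^ (n + 2s)`, where
`δ u x z = u x - u (x - z)`. Everything follows from one scaling estimate (`abs_integral_le`): if
`|N z| ≤ C * min 1 ((‖z‖ / r) ^ (4s))`, then `|∫ N z / ‖z‖ ^ (n + 2s)| ≤ C * K * r ^ (-2s)`, where `K`
is the finite integral of `min 1 (‖z‖ ^ (4s)) / ‖z‖ ^ (n + 2s)`. The exponent `4s` is available
because `α₁ + α₂ > 4s`; using it in place of `α₁ + α₂` makes the constant independent of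
`α₁, α₂`.

* With `r = 1` and `N = δ u₁ x * δ u₂ x` the estimate gives absolute convergence and the sup bound.
* For the Hölder bound at distance `r = ‖x - y‖ ≤ 1`, let `N` be the difference of the two products.
  Where `‖z‖ ≤ r`, each product is at most `K₁ K₂ ‖z‖ ^ (α₁ + α₂)`. Where `‖z‖ > r`, the differences
  `δ uᵢ x z - δ uᵢ y z` are at most `2 Kᵢ r ^ αᵢ` and the other factors are bounded. So the
  hypothesis holds with `C` a multiple of `r ^ min α₁ α₂`. For `r > 1` the sup bound suffices.
-/

open Real MeasureTheory

noncomputable section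

/-- The radial profile `min 1 (t ^ (4s)) / t ^ (n + 2s)` dominating the integrands. For `s > 0` its
value at `t = 0` is `0`. -/
def profile (n : ℕ) (s t : ℝ) : ℝ := min 1 (t ^ (4 * s)) / t ^ ((n : ℝ) + 2 * s)

lemma profile_nonneg (n : ℕ) (s : ℝ) {t : ℝ} (ht : 0 ≤ t) : 0 ≤ profile n s t := by
  unfold profile; positivity

lemma integrable_profile (n : ℕ) (hn : 2 ≤ n) (s : ℝ) (hs : 0 < s) :
    Integrable (fun z : EuclideanSpace ℝ (Fin n) => profile n s ‖z‖) := by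
  have : Nonempty (Fin n) := ⟨⟨0, by omega⟩⟩
  rw [integrable_fun_norm_addHaar volume (f := profile n s), finrank_euclideanSpace_fin,
    ← Set.Ioc_union_Ioi_eq_Ioi zero_le_one]
  have hpow : ∀ t : ℝ, 0 < t → t ^ (n - 1) = t ^ ((n : ℝ) - 1) := fun t _ => by
    rw [← Real.rpow_natCast, Nat.cast_sub (by omega), Nat.cast_one]
  refine IntegrableOn.union ?_ ?_
  · have h : IntegrableOn (fun t : ℝ => t ^ (2 * s - 1)) (Set.Ioc 0 1) := by
      rw [← intervalIntegrable_iff_integrableOn_Ioc_of_le zero_le_one]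
      exact intervalIntegral.intervalIntegrable_rpow' (by linarith)
    refine h.congr_fun (fun t ht => ?_) measurableSet_Ioc
    have h1 : t ^ (4 * s) ≤ 1 := Real.rpow_le_one ht.1.le ht.2 (by linarith)
    simp only [profile, smul_eq_mul, min_eq_right h1, hpow t ht.1]
    rw [← Real.rpow_sub ht.1, ← Real.rpow_add ht.1]
    congr 1; ring
  · have h : IntegrableOn (fun t : ℝ => t ^ (-1 - 2 * s)) (Set.Ioi 1) :=
      integrableOn_Ioi_rpow_of_lt (by linarith) one_pos
    refine h.congr_fun (fun t ht => ?_) measurableSet_Ioi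
    have h0 : 0 < t := one_pos.trans ht
    have h1 : 1 ≤ t ^ (4 * s) := Real.one_le_rpow (le_of_lt ht) (by linarith)
    simp only [profile, smul_eq_mul, min_eq_left h1, hpow t h0, one_div]
    rw [← Real.rpow_neg h0.le, ← Real.rpow_add h0]
    congr 1; ring

/-- A numerator bounded at scale `r` gives an integrand dominated by a rescaled profile. -/
lemma norm_div_rpow_le (n : ℕ) (s : ℝ) (N : EuclideanSpace ℝ (Fin n) → ℝ) (C r : ℝ)
    (hr : 0 < r) (hN : ∀ z, |N z| ≤ C * min 1 ((‖z‖ / r) ^ (4 * s)))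
    (z : EuclideanSpace ℝ (Fin n)) :
    ‖N z / ‖z‖ ^ ((n : ℝ) + 2 * s)‖
      ≤ C * r ^ (-((n : ℝ) + 2 * s)) * profile n s ‖r⁻¹ • z‖ := by
  have h0 : 0 ≤ ‖z‖ ^ ((n : ℝ) + 2 * s) := by positivity
  have h1 : ‖r⁻¹ • z‖ = ‖z‖ / r := by
    rw [norm_smul, Real.norm_of_nonneg (by positivity), inv_mul_eq_div]
  rw [norm_div, Real.norm_of_nonneg h0, Real.norm_eq_abs, h1, profile,
    Real.div_rpow (y := r) (z := (n : ℝ) + 2 * s) (norm_nonneg z) hr.le, Real.rpow_neg hr.le]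
  have h2 : 0 < r ^ ((n : ℝ) + 2 * s) := by positivity
  calc |N z| / ‖z‖ ^ ((n : ℝ) + 2 * s)
      ≤ C * min 1 ((‖z‖ / r) ^ (4 * s)) / ‖z‖ ^ ((n : ℝ) + 2 * s) := by gcongr; exact hN z
    _ = _ := by field_simp

/-- The scaling estimate: the domination is integrated, and rescaling contributes a factor `r ^ n`. -/
lemma abs_integral_le (n : ℕ) (hn : 2 ≤ n) (s : ℝ) (hs : 0 < s)
    (N : EuclideanSpace ℝ (Fin n) → ℝ) (C r : ℝ)
    (hr : 0 < r) (hN : ∀ z, |N z| ≤ C * min 1 ((‖z‖ / r) ^ (4 * s))) :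
    |∫ z, N z / ‖z‖ ^ ((n : ℝ) + 2 * s)|
      ≤ C * (∫ z : EuclideanSpace ℝ (Fin n), profile n s ‖z‖) * r ^ (-(2 * s)) := by
  have hint := (integrable_profile n hn s hs).comp_smul (inv_ne_zero hr.ne')
  have h := norm_integral_le_of_norm_le (hint.const_mul (C * r ^ (-((n : ℝ) + 2 * s))))
    (Filter.Eventually.of_forall (norm_div_rpow_le n s N C r hr hN))
  rw [Real.norm_eq_abs, integral_const_mul,
    Measure.integral_comp_inv_smul_of_nonneg volume
      (fun z : EuclideanSpace ℝ (Fin n) => profile n s ‖z‖) hr.le,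
    finrank_euclideanSpace_fin, smul_eq_mul] at h
  refine h.trans_eq ?_
  have : r ^ (-((n : ℝ) + 2 * s)) * r ^ n = r ^ (-(2 * s)) := by
    rw [← Real.rpow_natCast, ← Real.rpow_add hr]; congr 1; ring
  rw [← this]; ring

lemma continuous_of_holder {n : ℕ} {u : EuclideanSpace ℝ (Fin n) → ℝ} {K α : ℝ} (hα : 0 < α)
    (h : ∀ x y, |u x - u y| ≤ K * ‖x - y‖ ^ α) : Continuous u := by
  refine continuous_iff_continuousAt.2 fun x => ?_
  rw [ContinuousAt, tendsto_iff_norm_sub_tendsto_zero]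
  refine squeeze_zero (fun _ => norm_nonneg _) (fun y => h y x) ?_
  have hc : Continuous fun y : EuclideanSpace ℝ (Fin n) => K * ‖y - x‖ ^ α :=
    continuous_const.mul ((continuous_id.sub continuous_const).norm.rpow_const
      fun _ => Or.inr hα.le)
  simpa [Real.zero_rpow hα.ne'] using hc.tendsto x

lemma holder_const_nonneg {n : ℕ} (hn : 2 ≤ n) {u : EuclideanSpace ℝ (Fin n) → ℝ} {K α : ℝ}
    (h : ∀ x y, |u x - u y| ≤ K * ‖x - y‖ ^ α) : 0 ≤ K := by
  have : Nonempty (Fin n) := ⟨⟨0, by omega⟩⟩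
  obtain ⟨e, he⟩ := exists_norm_eq (EuclideanSpace ℝ (Fin n)) zero_le_one
  simpa [he] using (abs_nonneg _).trans (h e 0)

/-- Writing `t = r * (t / r)` with both factors at most `1`, the exponent `α₁ + α₂` is lowered to `α`
on `r` and to `4s` on `t / r`. -/
lemma rpow_mul_rpow_le {t r s α α₁ α₂ : ℝ} (ht : 0 ≤ t) (hr : 0 < r) (hr1 : r ≤ 1) (htr : t ≤ r)
    (hs : 0 < s) (h1 : 2 * s < α₁) (h2 : 2 * s < α₂) (hα : α ≤ α₁) :
    t ^ α₁ * t ^ α₂ ≤ r ^ α * (t / r) ^ (4 * s) := by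
  have hq : t / r ≤ 1 := (div_le_one hr).2 htr
  have hq0 : 0 ≤ t / r := by positivity
  have e : t = r * (t / r) := by field_simp
  calc t ^ α₁ * t ^ α₂ = t ^ (α₁ + α₂) :=
        (Real.rpow_add_of_nonneg ht (by linarith) (by linarith)).symm
    _ = r ^ (α₁ + α₂) * (t / r) ^ (α₁ + α₂) := by
        conv_lhs => rw [e]
        exact Real.mul_rpow hr.le hq0
    _ ≤ r ^ α * (t / r) ^ (4 * s) := by
        refine mul_le_mul (Real.rpow_le_rpow_of_exponent_ge hr hr1 (by linarith)) ?_
          (by positivity) (by positivity)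
        exact Real.rpow_le_rpow_of_exponent_ge_of_imp hq0 hq (by linarith)
          (fun _ h => by linarith)

/-- The product of increments satisfies the hypothesis of `abs_integral_le` with `r = 1`; the factor
`‖z‖ / 1` is written in that form to match it. -/
lemma increment_mul_bound {n : ℕ} (hn : 2 ≤ n) {s α₁ α₂ M₁ K₁ M₂ K₂ : ℝ} (hs : 0 < s)
    (ha₁ : 2 * s < α₁) (ha₂ : 2 * s < α₂) {u₁ u₂ : EuclideanSpace ℝ (Fin n) → ℝ}
    (hM₁ : ∀ x, |u₁ x| ≤ M₁) (hK₁ : ∀ x y, |u₁ x - u₁ y| ≤ K₁ * ‖x - y‖ ^ α₁)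
    (hM₂ : ∀ x, |u₂ x| ≤ M₂) (hK₂ : ∀ x y, |u₂ x - u₂ y| ≤ K₂ * ‖x - y‖ ^ α₂)
    (x z : EuclideanSpace ℝ (Fin n)) :
    |(u₁ x - u₁ (x - z)) * (u₂ x - u₂ (x - z))|
      ≤ 4 * ((M₁ + K₁) * (M₂ + K₂)) * min 1 ((‖z‖ / 1) ^ (4 * s)) := by
  have k1 := holder_const_nonneg hn hK₁
  have k2 := holder_const_nonneg hn hK₂
  have m1 : 0 ≤ M₁ := (abs_nonneg _).trans (hM₁ x)
  have m2 : 0 ≤ M₂ := (abs_nonneg _).trans (hM₂ x)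
  have a1 := hK₁ x (x - z)
  have a2 := hK₂ x (x - z)
  rw [sub_sub_cancel] at a1 a2
  rw [abs_mul]
  rcases le_or_gt ‖z‖ 1 with hz | hz
  · have hp := rpow_mul_rpow_le (α := α₁) (norm_nonneg z) one_pos le_rfl hz hs ha₁ ha₂ le_rfl
    rw [Real.one_rpow, one_mul] at hp
    rw [min_eq_right (Real.rpow_le_one (by positivity) (by simpa using hz) (by linarith))]
    calc _ ≤ (K₁ * ‖z‖ ^ α₁) * (K₂ * ‖z‖ ^ α₂) := by gcongr
      _ = K₁ * K₂ * (‖z‖ ^ α₁ * ‖z‖ ^ α₂) := by ring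
      _ ≤ K₁ * K₂ * (‖z‖ / 1) ^ (4 * s) := by gcongr
      _ ≤ _ := by
        gcongr ?_ * _
        nlinarith [mul_nonneg m1 m2, mul_nonneg m1 k2, mul_nonneg k1 m2, mul_nonneg k1 k2]
  · rw [min_eq_left (Real.one_le_rpow (by simpa using hz.le) (by linarith)), mul_one]
    have b1 : |u₁ x - u₁ (x - z)| ≤ 2 * M₁ := by
      linarith [abs_sub (u₁ x) (u₁ (x - z)), hM₁ x, hM₁ (x - z)]
    have b2 : |u₂ x - u₂ (x - z)| ≤ 2 * M₂ := by
      linarith [abs_sub (u₂ x) (u₂ (x - z)), hM₂ x, hM₂ (x - z)]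
    calc _ ≤ (2 * M₁) * (2 * M₂) := by gcongr
      _ ≤ _ := by
        nlinarith [mul_nonneg m1 m2, mul_nonneg m1 k2, mul_nonneg k1 m2, mul_nonneg k1 k2]

/-- The difference of the products of increments at `x` and `y` satisfies the hypothesis of
`abs_integral_le` with `r = ‖x - y‖` and `C` a multiple of `r ^ min α₁ α₂`. -/
lemma increment_mul_sub_bound {n : ℕ} (hn : 2 ≤ n) {s α₁ α₂ M₁ K₁ M₂ K₂ : ℝ} (hs : 0 < s)
    (ha₁ : 2 * s < α₁) (ha₂ : 2 * s < α₂) {u₁ u₂ : EuclideanSpace ℝ (Fin n) → ℝ}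
    (hM₁ : ∀ x, |u₁ x| ≤ M₁) (hK₁ : ∀ x y, |u₁ x - u₁ y| ≤ K₁ * ‖x - y‖ ^ α₁)
    (hM₂ : ∀ x, |u₂ x| ≤ M₂) (hK₂ : ∀ x y, |u₂ x - u₂ y| ≤ K₂ * ‖x - y‖ ^ α₂)
    (x y : EuclideanSpace ℝ (Fin n)) (hr : 0 < ‖x - y‖) (hr1 : ‖x - y‖ ≤ 1)
    (z : EuclideanSpace ℝ (Fin n)) :
    |(u₁ x - u₁ (x - z)) * (u₂ x - u₂ (x - z)) - (u₁ y - u₁ (y - z)) * (u₂ y - u₂ (y - z))|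
      ≤ 4 * ((M₁ + K₁) * (M₂ + K₂)) * ‖x - y‖ ^ min α₁ α₂
        * min 1 ((‖z‖ / ‖x - y‖) ^ (4 * s)) := by
  have k1 := holder_const_nonneg hn hK₁
  have k2 := holder_const_nonneg hn hK₂
  have m1 : 0 ≤ M₁ := (abs_nonneg _).trans (hM₁ x)
  have m2 : 0 ≤ M₂ := (abs_nonneg _).trans (hM₂ x)
  set r := ‖x - y‖ with hrdef
  rcases le_or_gt ‖z‖ r with hz | hz
  · have hp := rpow_mul_rpow_le (norm_nonneg z) hr hr1 hz hs ha₁ ha₂ (min_le_left α₁ α₂)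
    rw [min_eq_right (Real.rpow_le_one (by positivity) ((div_le_one hr).2 hz) (by linarith))]
    have key : ∀ w, |(u₁ w - u₁ (w - z)) * (u₂ w - u₂ (w - z))|
        ≤ K₁ * K₂ * (r ^ min α₁ α₂ * (‖z‖ / r) ^ (4 * s)) := fun w => by
      have a1 := hK₁ w (w - z)
      have a2 := hK₂ w (w - z)
      rw [sub_sub_cancel] at a1 a2
      rw [abs_mul]
      calc _ ≤ (K₁ * ‖z‖ ^ α₁) * (K₂ * ‖z‖ ^ α₂) := by gcongr
        _ = K₁ * K₂ * (‖z‖ ^ α₁ * ‖z‖ ^ α₂) := by ring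
        _ ≤ _ := by gcongr
    calc _ ≤ _ := abs_sub _ _
      _ ≤ _ := add_le_add (key x) (key y)
      _ = 2 * (K₁ * K₂) * (r ^ min α₁ α₂ * (‖z‖ / r) ^ (4 * s)) := by ring
      _ ≤ 4 * ((M₁ + K₁) * (M₂ + K₂)) * (r ^ min α₁ α₂ * (‖z‖ / r) ^ (4 * s)) := by
        gcongr ?_ * _
        nlinarith [mul_nonneg m1 m2, mul_nonneg m1 k2, mul_nonneg k1 m2, mul_nonneg k1 k2]
      _ = _ := by ring
  -- Far part: the discrete product rule isolates `δ uᵢ x z - δ uᵢ y z`, controlled by `‖x - y‖`.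
  · rw [min_eq_left (Real.one_le_rpow ((one_le_div hr).2 hz.le) (by linarith)), mul_one]
    have d1 : |(u₁ x - u₁ (x - z)) - (u₁ y - u₁ (y - z))| ≤ 2 * K₁ * r ^ min α₁ α₂ := by
      have h1 := hK₁ x y
      have h2 := hK₁ (x - z) (y - z)
      rw [sub_sub_sub_cancel_right] at h2
      rw [show (u₁ x - u₁ (x - z)) - (u₁ y - u₁ (y - z))
        = (u₁ x - u₁ y) - (u₁ (x - z) - u₁ (y - z)) by ring]
      have h3 : K₁ * r ^ α₁ ≤ K₁ * r ^ min α₁ α₂ := mul_le_mul_of_nonneg_left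
        (Real.rpow_le_rpow_of_exponent_ge hr hr1 (min_le_left _ _)) k1
      linarith [abs_sub (u₁ x - u₁ y) (u₁ (x - z) - u₁ (y - z))]
    have d2 : |(u₂ x - u₂ (x - z)) - (u₂ y - u₂ (y - z))| ≤ 2 * K₂ * r ^ min α₁ α₂ := by
      have h1 := hK₂ x y
      have h2 := hK₂ (x - z) (y - z)
      rw [sub_sub_sub_cancel_right] at h2
      rw [show (u₂ x - u₂ (x - z)) - (u₂ y - u₂ (y - z))
        = (u₂ x - u₂ y) - (u₂ (x - z) - u₂ (y - z)) by ring]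
      have h3 : K₂ * r ^ α₂ ≤ K₂ * r ^ min α₁ α₂ := mul_le_mul_of_nonneg_left
        (Real.rpow_le_rpow_of_exponent_ge hr hr1 (min_le_right _ _)) k2
      linarith [abs_sub (u₂ x - u₂ y) (u₂ (x - z) - u₂ (y - z))]
    have b2 : |u₂ x - u₂ (x - z)| ≤ 2 * M₂ := by
      linarith [abs_sub (u₂ x) (u₂ (x - z)), hM₂ x, hM₂ (x - z)]
    have b1 : |u₁ y - u₁ (y - z)| ≤ 2 * M₁ := by
      linarith [abs_sub (u₁ y) (u₁ (y - z)), hM₁ y, hM₁ (y - z)]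
    have e : (u₁ x - u₁ (x - z)) * (u₂ x - u₂ (x - z))
          - (u₁ y - u₁ (y - z)) * (u₂ y - u₂ (y - z))
        = ((u₁ x - u₁ (x - z)) - (u₁ y - u₁ (y - z))) * (u₂ x - u₂ (x - z))
          + (u₁ y - u₁ (y - z)) * ((u₂ x - u₂ (x - z)) - (u₂ y - u₂ (y - z))) := by ring
    rw [e]
    calc _ ≤ _ := abs_add_le _ _
      _ ≤ (2 * K₁ * r ^ min α₁ α₂) * (2 * M₂) + (2 * M₁) * (2 * K₂ * r ^ min α₁ α₂) := by
        rw [abs_mul, abs_mul]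
        gcongr
      _ = 4 * (K₁ * M₂ + M₁ * K₂) * r ^ min α₁ α₂ := by ring
      _ ≤ _ := by
        gcongr ?_ * _
        nlinarith [mul_nonneg m1 m2, mul_nonneg m1 k2, mul_nonneg k1 m2, mul_nonneg k1 k2]

theorem statement5
    (n : ℕ) (hn : 2 ≤ n) (s : ℝ) (hs : s ∈ Set.Ioo (0:ℝ) 1) :
    ∃ C₁ > (0:ℝ), ∀ α₁ α₂ : ℝ, α₁ ∈ Set.Ioo (2 * s) 1 → α₂ ∈ Set.Ioo (2 * s) 1 →
      ∀ (u₁ u₂ : EuclideanSpace ℝ (Fin n) → ℝ) (M₁ K₁ M₂ K₂ : ℝ),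
        (∀ x, |u₁ x| ≤ M₁) → (∀ x y, |u₁ x - u₁ y| ≤ K₁ * ‖x - y‖ ^ α₁) →
        (∀ x, |u₂ x| ≤ M₂) → (∀ x y, |u₂ x - u₂ y| ≤ K₂ * ‖x - y‖ ^ α₂) →
        (∀ x, Integrable
            (fun y => (u₁ x - u₁ y) * (u₂ x - u₂ y) / ‖x - y‖ ^ ((n : ℝ) + 2 * s)))
        ∧ (∀ x,
            |∫ y, (u₁ x - u₁ y) * (u₂ x - u₂ y) / ‖x - y‖ ^ ((n : ℝ) + 2 * s)|
              ≤ C₁ * ((M₁ + K₁) * (M₂ + K₂)))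
        ∧ (∀ x y,
            |(∫ z, (u₁ x - u₁ z) * (u₂ x - u₂ z) / ‖x - z‖ ^ ((n : ℝ) + 2 * s))
              - ∫ z, (u₁ y - u₁ z) * (u₂ y - u₂ z) / ‖y - z‖ ^ ((n : ℝ) + 2 * s)|
              ≤ C₁ * ((M₁ + K₁) * (M₂ + K₂)) * ‖x - y‖ ^ (min α₁ α₂ - 2 * s)) := by
  obtain ⟨hs0, -⟩ := hs
  set K : ℝ := ∫ z : EuclideanSpace ℝ (Fin n), profile n s ‖z‖ with hK
  have hK0 : 0 ≤ K := integral_nonneg fun z => profile_nonneg n s (norm_nonneg z)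
  refine ⟨8 * K + 1, by positivity, ?_⟩
  intro α₁ α₂ hα₁ hα₂ u₁ u₂ M₁ K₁ M₂ K₂ hM₁ hK₁ hM₂ hK₂
  have k1 := holder_const_nonneg hn hK₁
  have k2 := holder_const_nonneg hn hK₂
  have m1 : 0 ≤ M₁ := (abs_nonneg _).trans (hM₁ 0)
  have m2 : 0 ≤ M₂ := (abs_nonneg _).trans (hM₂ 0)
  have hc1 : Measurable u₁ := (continuous_of_holder (by linarith [hα₁.1]) hK₁).measurable
  have hc2 : Measurable u₂ := (continuous_of_holder (by linarith [hα₂.1]) hK₂).measurable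
  set P := (M₁ + K₁) * (M₂ + K₂) with hP
  have hP0 : 0 ≤ P := by positivity
  have hb := increment_mul_bound hn hs0 hα₁.1 hα₂.1 hM₁ hK₁ hM₂ hK₂
  -- Integrability and integrals in the increment variable `z = x - y`.
  have hint : ∀ x, Integrable (fun z => (u₁ x - u₁ (x - z)) * (u₂ x - u₂ (x - z))
      / ‖z‖ ^ ((n : ℝ) + 2 * s)) := fun x => by
    refine Integrable.mono' (((integrable_profile n hn s hs0).comp_smul
      (inv_ne_zero one_ne_zero)).const_mul _) (Measurable.aestronglyMeasurable (by fun_prop))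
      (Filter.Eventually.of_forall (norm_div_rpow_le n s _ _ 1 one_pos (hb x)))
  have hsub : ∀ x, ∫ y, (u₁ x - u₁ y) * (u₂ x - u₂ y) / ‖x - y‖ ^ ((n : ℝ) + 2 * s)
      = ∫ z, (u₁ x - u₁ (x - z)) * (u₂ x - u₂ (x - z)) / ‖z‖ ^ ((n : ℝ) + 2 * s) := fun x => by
    rw [← integral_sub_left_eq_self _ volume x]
    simp only [sub_sub_cancel]
  have hsup : ∀ x, |∫ y, (u₁ x - u₁ y) * (u₂ x - u₂ y) / ‖x - y‖ ^ ((n : ℝ) + 2 * s)|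
      ≤ 4 * P * K := fun x => by
    rw [hsub x]
    simpa using abs_integral_le n hn s hs0 _ _ 1 one_pos (hb x)
  have hKP : 0 ≤ K * P := mul_nonneg hK0 hP0
  refine ⟨fun x => ?_, fun x => (hsup x).trans (by nlinarith), fun x y => ?_⟩
  · simpa only [sub_sub_cancel] using (hint x).comp_sub_left x
  · rcases (norm_nonneg (x - y)).eq_or_lt with h0 | h0
    · obtain rfl : x = y := sub_eq_zero.1 (norm_eq_zero.1 h0.symm)
      rw [sub_self, abs_zero]
      positivity
    · rcases le_or_gt ‖x - y‖ 1 with h1 | h1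
      · rw [hsub x, hsub y, ← integral_sub (hint x) (hint y)]
        simp only [← sub_div]
        have h := abs_integral_le n hn s hs0 _ _ _ h0
          (increment_mul_sub_bound hn hs0 hα₁.1 hα₂.1 hM₁ hK₁ hM₂ hK₂ x y h0 h1)
        refine h.trans ?_
        rw [← hP, ← hK, sub_eq_add_neg (min α₁ α₂), Real.rpow_add h0]
        calc _ = 4 * (K * P) * (‖x - y‖ ^ min α₁ α₂ * ‖x - y‖ ^ (-(2 * s))) := by ring
          _ ≤ _ := by
            gcongr ?_ * _
            nlinarith
      · have hpow : 1 ≤ ‖x - y‖ ^ (min α₁ α₂ - 2 * s) :=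
          Real.one_le_rpow h1.le (sub_nonneg.2 (le_min hα₁.1.le hα₂.1.le))
        calc _ ≤ _ := abs_sub _ _
          _ ≤ (8 * K + 1) * P := by linarith [hsup x, hsup y]
          _ ≤ _ := le_mul_of_one_le_right (by positivity) hpow
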